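/- arXiv:2508.09435 — 2 statements merged into one kernel-verified Lean document; each statement's English description precedes it below -/
import Mathlib

section
/- Let K be a field of characteristic zero, d ≥ 1, and for each multi-index j ∈ ℕ^d with |j| = 2 let c_j ∈ K. Define the linear operator L_* on polynomials in d variables over K by L_*(P) = Σ_{|j|=2} c_j ∂^j P. Suppose there exists k ∈ {1,...,d} such that c_{2e_k} ≠ 0, where 2e_k is the multi-index with k-th entry 2 and all other entries 0. For n ∈ ℕ, let V_n be the linear span of the monomials X^j with |j| = n+2 and j_k ≥ 2. Then the restriction of L_* to V_n is a linear bijection from V_n onto the space of homogeneous polynomials of degree n. -/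
/-- The iterated formal partial derivative `∂^j = ∂₁^{j₁} ∘ ⋯ ∘ ∂_d^{j_d}`
associated with a multi-index `j : Fin d →₀ ℕ`. -/
noncomputable def iterPDeriv {K : Type*} [CommSemiring K] {d : ℕ} (j : Fin d →₀ ℕ) :
    MvPolynomial (Fin d) K → MvPolynomial (Fin d) K :=
  (List.ofFn fun i : Fin d => (fun P => MvPolynomial.pderiv i P)^[j i]).foldr (· ∘ ·) id

/-- The (finite) set of multi-indices `j ∈ ℕ^d` with `|j| = 2`: every such `j` is of the
form `e_i + e_l` for a pair `(i, l)`. -/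
noncomputable def degTwoIndices (d : ℕ) : Finset (Fin d →₀ ℕ) :=
  (Finset.univ : Finset (Fin d × Fin d)).image fun il =>
    Finsupp.single il.1 1 + Finsupp.single il.2 1

/-- The second-order constant-coefficient operator `L⋆ P = ∑_{|j|=2} c_j ∂^j P`. -/
noncomputable def Lstar {K : Type*} [CommSemiring K] {d : ℕ} (c : (Fin d →₀ ℕ) → K)
    (P : MvPolynomial (Fin d) K) : MvPolynomial (Fin d) K :=
  ∑ j ∈ degTwoIndices d, c j • iterPDeriv j P

open MvPolynomial in
lemma aux_iter {K : Type*} [Field K] [CharZero K] {d : ℕ} (i : Fin d) (t : ℕ) :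
    ∀ s : Fin d →₀ ℕ, ∃ N : K, N ≠ 0 ∧ ∀ P : MvPolynomial (Fin d) K,
      coeff s ((fun P => pderiv i P)^[t] P) = N * coeff (s + Finsupp.single i t) P := by
  induction t with
  | zero => intro s; exact ⟨1, one_ne_zero, fun P => by simp⟩
  | succ t ih =>
    intro s
    obtain ⟨N, hN, h⟩ := ih s
    refine ⟨N * (((s + Finsupp.single i t) i : ℕ) + 1 : K),
      mul_ne_zero hN (Nat.cast_add_one_ne_zero _), fun P => ?_⟩
    rw [Function.iterate_succ_apply, h, coeff_pderiv, add_assoc, ← Finsupp.single_add]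
    ring

open MvPolynomial in
lemma aux_list {K : Type*} [Field K] [CharZero K] {d : ℕ} (j : Fin d →₀ ℕ) (l : List (Fin d)) :
    ∀ s : Fin d →₀ ℕ, ∃ N : K, N ≠ 0 ∧ ∀ P : MvPolynomial (Fin d) K,
      coeff s (((l.map fun i => (fun P : MvPolynomial (Fin d) K => pderiv i P)^[j i]).foldr
        (· ∘ ·) id) P) = N * coeff (s + (l.map fun i => Finsupp.single i (j i)).sum) P := by
  induction l with
  | nil => intro s; exact ⟨1, one_ne_zero, fun P => by simp⟩
  | cons i l ih =>
    intro s
    obtain ⟨N, hN, h⟩ := aux_iter (K := K) i (j i) s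
    obtain ⟨M, hM, h'⟩ := ih (s + Finsupp.single i (j i))
    refine ⟨N * M, mul_ne_zero hN hM, fun P => ?_⟩
    rw [List.map_cons, List.foldr_cons, Function.comp_apply, h, h', List.map_cons, List.sum_cons,
      add_assoc, mul_assoc]

open MvPolynomial in
lemma aux_pd {K : Type*} [Field K] [CharZero K] {d : ℕ} (j s : Fin d →₀ ℕ) :
    ∃ N : K, N ≠ 0 ∧ ∀ P : MvPolynomial (Fin d) K,
      coeff s (iterPDeriv j P) = N * coeff (s + j) P := by
  obtain ⟨N, hN, h⟩ := aux_list (K := K) j (List.finRange d) s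
  refine ⟨N, hN, fun P => ?_⟩
  have e : ((List.finRange d).map fun i => Finsupp.single i (j i)).sum = j := by
    rw [← List.ofFn_eq_map, List.sum_ofFn, Finsupp.univ_sum_single]
  rw [← e, ← h, e, iterPDeriv, List.ofFn_eq_map]

open MvPolynomial in
lemma aux_L {K : Type*} [Field K] [CharZero K] {d : ℕ} (c : (Fin d →₀ ℕ) → K) :
    ∃ N : (Fin d →₀ ℕ) → (Fin d →₀ ℕ) → K, (∀ s m, N s m ≠ 0) ∧
      ∀ s (P : MvPolynomial (Fin d) K),
      coeff s (Lstar c P) = ∑ m ∈ degTwoIndices d, c m * N s m * coeff (s + m) P := by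
  choose N hN h using fun s m => aux_pd (K := K) (d := d) m s
  refine ⟨N, hN, fun s P => ?_⟩
  simp [Lstar, coeff_sum, h, mul_assoc]

lemma aux_deg {d : ℕ} {m : Fin d →₀ ℕ} (hm : m ∈ degTwoIndices d) : m.degree = 2 := by
  simp only [degTwoIndices, Finset.mem_image] at hm
  obtain ⟨il, -, rfl⟩ := hm
  simp [map_add]

lemma aux_lt {d : ℕ} {m : Fin d →₀ ℕ} (k : Fin d) (hm : m ∈ degTwoIndices d)
    (h : m ≠ Finsupp.single k 2) : m k < 2 := by
  simp only [degTwoIndices, Finset.mem_image] at hm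
  obtain ⟨⟨i, l⟩, -, rfl⟩ := hm
  by_cases hi : i = k <;> by_cases hl : l = k <;> simp_all [Finsupp.single_apply]
  exact h (by rw [← Finsupp.single_add])

lemma aux_mem {d : ℕ} (k : Fin d) : Finsupp.single k 2 ∈ degTwoIndices d := by
  simp only [degTwoIndices, Finset.mem_image]
  exact ⟨(k, k), Finset.mem_univ _, by rw [← Finsupp.single_add]⟩

lemma aux_sum {d : ℕ} (j : Fin d →₀ ℕ) : (j.sum fun _ e => e) = j.degree := rfl

open MvPolynomial in
lemma aux_span {K : Type*} [Field K] {d : ℕ} (W : Submodule K (MvPolynomial (Fin d) K))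
    (P : MvPolynomial (Fin d) K) (h : ∀ s, coeff s P ≠ 0 → monomial s (1 : K) ∈ W) : P ∈ W := by
  rw [P.as_sum]
  refine Submodule.sum_mem _ fun s hs => ?_
  have := W.smul_mem (coeff s P) (h s (mem_support_iff.1 hs))
  simpa [smul_monomial] using this

open MvPolynomial in
lemma aux_V {K : Type*} [Field K] {d : ℕ} (k : Fin d) (n : ℕ) (P : MvPolynomial (Fin d) K)
    (hP : P ∈ Submodule.span K {P : MvPolynomial (Fin d) K |
          ∃ j : Fin d →₀ ℕ, (j.sum fun _ e => e) = n + 2 ∧ 2 ≤ j k ∧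
            P = MvPolynomial.monomial j (1 : K)}) :
    ∀ s, coeff s P ≠ 0 → s.degree = n + 2 ∧ 2 ≤ s k := by
  induction hP using Submodule.span_induction with
  | mem x hx =>
    obtain ⟨j, h1, h2, rfl⟩ := hx
    intro s hs
    rw [coeff_monomial] at hs
    have : j = s := by by_contra h; simp [h] at hs
    subst this
    exact ⟨h1, h2⟩
  | zero => intro s hs; simp at hs
  | add x y _ _ hx hy =>
    intro s hs
    by_cases h : coeff s x = 0
    · exact hy s (by simpa [h] using hs)
    · exact hx s h
  | smul a x _ hx =>
    intro s hs
    exact hx s (by intro h; simp [h] at hs)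

/-- If `char K = 0` and `c_{2 e_k} ≠ 0`, then the restriction of `L⋆`
to `V_n`, the span of the monomials `X^j` with `|j| = n + 2` and `j_k ≥ 2`, is a
bijection from `V_n` onto the space of homogeneous polynomials of degree `n`. -/
theorem stmt_8 {K : Type*} [Field K] [CharZero K] {d : ℕ} (hd : 1 ≤ d)
    (c : (Fin d →₀ ℕ) → K) (k : Fin d)
    (hc : c (Finsupp.single k 2) ≠ 0) (n : ℕ) :
    Set.BijOn (Lstar c)
      ((Submodule.span K {P : MvPolynomial (Fin d) K |
          ∃ j : Fin d →₀ ℕ, (j.sum fun _ e => e) = n + 2 ∧ 2 ≤ j k ∧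
            P = MvPolynomial.monomial j (1 : K)}) : Set (MvPolynomial (Fin d) K))
      ((MvPolynomial.homogeneousSubmodule (Fin d) K n) : Set (MvPolynomial (Fin d) K)) := by
  classical
  obtain ⟨N, hN, hL⟩ := aux_L c
  let L : MvPolynomial (Fin d) K →ₗ[K] MvPolynomial (Fin d) K :=
    { toFun := Lstar c
      map_add' := fun P Q => by
        ext s; simp [hL, mul_add, Finset.sum_add_distrib]
      map_smul' := fun a P => by
        ext s; simp only [hL, MvPolynomial.coeff_smul, smul_eq_mul, RingHom.id_apply,
          Finset.mul_sum]
        exact Finset.sum_congr rfl fun _ _ => by ring }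
  have hLa : ∀ P, L P = Lstar c P := fun _ => rfl
  set V := Submodule.span K {P : MvPolynomial (Fin d) K |
          ∃ j : Fin d →₀ ℕ, (j.sum fun _ e => e) = n + 2 ∧ 2 ≤ j k ∧
            P = MvPolynomial.monomial j (1 : K)} with hV
  refine ⟨?_, ?_, ?_⟩
  · intro P hP
    rw [SetLike.mem_coe, MvPolynomial.mem_homogeneousSubmodule]
    intro s hs
    rw [hL] at hs
    obtain ⟨m, hm, hne⟩ := Finset.exists_ne_zero_of_sum_ne_zero hs
    have h1 := (aux_V k n P hP (s + m) (right_ne_zero_of_mul hne)).1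
    rw [map_add, aux_deg hm] at h1
    have h2 : s.degree = n := by omega
    rw [← h2, Finsupp.degree_eq_weight_one]
    rfl
  · intro P hP Q hQ hPQ
    rw [← sub_eq_zero]
    have hR : P - Q ∈ V := V.sub_mem hP hQ
    have hLR : Lstar c (P - Q) = 0 := by
      rw [← hLa, map_sub, hLa, hLa, hPQ, sub_self]
    generalize P - Q = R at hR hLR
    by_contra hne
    obtain ⟨j, hj, hmin⟩ := R.support.exists_min_image (fun s => s k)
      (MvPolynomial.support_nonempty.2 hne)
    rw [MvPolynomial.mem_support_iff] at hj
    have h2 := (aux_V k n R hR j hj).2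
    have hle : Finsupp.single k 2 ≤ j := by
      rw [Finsupp.single_le_iff]; exact h2
    have h0 : MvPolynomial.coeff (j - Finsupp.single k 2) (Lstar c R) = 0 := by simp [hLR]
    rw [hL, Finset.sum_eq_single_of_mem _ (aux_mem k), tsub_add_cancel_of_le hle] at h0
    · exact mul_ne_zero (mul_ne_zero hc (hN _ _)) hj h0
    · intro m hm hmk
      have h3 := aux_lt k hm hmk
      by_contra h4
      have h5 := hmin _ (MvPolynomial.mem_support_iff.2 (right_ne_zero_of_mul h4))
      simp at h5
      omega
  · have key : ∀ t : ℕ, ∀ i : Fin d →₀ ℕ, i.degree = n → n < i k + t →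
        MvPolynomial.monomial i (1 : K) ∈ V.map L := by
      intro t
      induction t with
      | zero =>
        intro i hi h
        have := Finsupp.le_degree k i
        omega
      | succ t ih =>
        intro i hi h
        set X := MvPolynomial.monomial (i + Finsupp.single k 2) (1 : K) with hX
        have hXV : X ∈ V := Submodule.subset_span
          ⟨i + Finsupp.single k 2, by rw [aux_sum, map_add, hi]; simp, by simp, rfl⟩
        set a := c (Finsupp.single k 2) * N i (Finsupp.single k 2) with ha
        have ha0 : a ≠ 0 := mul_ne_zero hc (hN _ _)
        have hR : L X - MvPolynomial.monomial i a ∈ V.map L := by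
          refine aux_span _ _ fun s hs => ?_
          have hsi : s ≠ i := by
            rintro rfl
            apply hs
            rw [MvPolynomial.coeff_sub, hLa, hL,
              Finset.sum_eq_single_of_mem _ (aux_mem k)]
            · simp [hX, ha]
            · intro m hm hmk
              rw [hX, MvPolynomial.coeff_monomial, if_neg, mul_zero]
              intro h; exact hmk (add_left_cancel h).symm
          rw [MvPolynomial.coeff_sub, MvPolynomial.coeff_monomial, if_neg hsi.symm, sub_zero,
            hLa, hL] at hs
          obtain ⟨m, hm, hne⟩ := Finset.exists_ne_zero_of_sum_ne_zero hs
          have h1 := right_ne_zero_of_mul hne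
          rw [hX, MvPolynomial.coeff_monomial] at h1
          have h2 : i + Finsupp.single k 2 = s + m := by
            by_contra h; simp [h] at h1
          have hmk : m ≠ Finsupp.single k 2 := by
            rintro rfl
            exact hsi (add_right_cancel h2).symm
          have h3 := aux_lt k hm hmk
          have h4 := congrArg (fun f => f k) h2
          have h5 := congrArg Finsupp.degree h2
          simp only [map_add, aux_deg hm, aux_deg (aux_mem k)] at h5
          simp at h4
          exact ih s (by omega) (by omega)
        have hm : MvPolynomial.monomial i a ∈ V.map L := by
          have := (V.map L).sub_mem (Submodule.mem_map_of_mem (f := L) hXV) hR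
          simpa using this
        have := (V.map L).smul_mem a⁻¹ hm
        simpa [MvPolynomial.smul_monomial, ha0] using this
    intro P hP
    rw [SetLike.mem_coe, MvPolynomial.mem_homogeneousSubmodule] at hP
    have : P ∈ V.map L := by
      refine aux_span _ _ fun s hs => key (n + 1) s ?_ (by omega)
      rw [Finsupp.degree_eq_weight_one]
      exact hP hs
    obtain ⟨Q, hQ, h⟩ := this
    exact ⟨Q, hQ, h⟩
end

section
/- Let d ≥ 1, p ≥ 2 be integers, let Ω ⊆ ℝ^d be an open neighborhood of a point x0, let κ : Ω → ℂ be such that κ^2 is of class C^{p−2} on Ω, and let u : Ω → ℂ be of class C^{p+2} on Ω with Δu + κ^2 u = 0 on Ω and u(x0) ≠ 0. Then there exist a polynomial P ∈ ℂ[X_1,...,X_d] of total degree at most p satisfying the quasi-Trefftz property — all iterated derivatives of order at most p−2 of the function x ↦ ΔP(x) + Σ_{i=1}^d (∂_i P(x))^2 + κ(x)^2 vanish at x0 — together with a constant C > 0 and an open neighborhood U ⊆ Ω of x0, such that |u(x) − e^{P(x)}| ≤ C |x − x0|^{p+1} for all x ∈ U. -/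
open Filter Topology

section gpw
variable {E F : Type} [NormedAddCommGroup E] [NormedSpace ℝ E]
  [NormedAddCommGroup F] [NormedSpace ℝ F]

def GFlat (n : ℕ) (w : E → F) (x0 : E) : Prop := ∀ m ≤ n, iteratedFDeriv ℝ m w x0 = 0

lemma GFlat.add {n : ℕ} {f g : E → F} {x0 : E} (hf : GFlat n f x0) (hg : GFlat n g x0)
    (cf : ContDiffAt ℝ n f x0) (cg : ContDiffAt ℝ n g x0) : GFlat n (fun x => f x + g x) x0 := by
  intro m hm
  have := iteratedFDeriv_add_apply (𝕜 := ℝ) (i := m) (x := x0) (f := f) (g := g)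
    (cf.of_le (by exact_mod_cast hm)) (cg.of_le (by exact_mod_cast hm))
  rw [hf m hm, hg m hm, add_zero] at this
  exact this

lemma GFlat.sum {ι : Type} (s : Finset ι) {n : ℕ} {f : ι → E → F} {x0 : E}
    (hf : ∀ i, GFlat n (f i) x0)
    (cf : ∀ i, ContDiffAt ℝ n (f i) x0) : GFlat n (fun x => ∑ i ∈ s, f i x) x0 := by
  classical
  induction s using Finset.induction_on with
  | empty =>
    intro m hm
    simp
  | insert a s ha ih =>
    simp only [Finset.sum_insert ha]
    exact (hf a).add ih (cf a) (ContDiffAt.sum fun i _ => cf i)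

lemma GFlat.mul {n : ℕ} {f g : E → ℂ} {x0 : E} (hf : GFlat n f x0)
    (cf : ContDiffAt ℝ n f x0) (cg : ContDiffAt ℝ n g x0) : GFlat n (fun x => f x * g x) x0 := by
  intro m hm
  obtain ⟨s, hs, hfs⟩ := cf.contDiffOn (m := n) le_rfl (by simp)
  obtain ⟨t, ht, hgt⟩ := cg.contDiffOn (m := n) le_rfl (by simp)
  obtain ⟨U, hU, oU, xU⟩ := mem_nhds_iff.1 (inter_mem hs ht)
  have := norm_iteratedFDerivWithin_mul_le (n := m)
    (hfs.mono (hU.trans Set.inter_subset_left)) (hgt.mono (hU.trans Set.inter_subset_right))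
    oU.uniqueDiffOn xU (by exact_mod_cast hm)
  rw [iteratedFDerivWithin_of_isOpen m oU xU] at this
  rw [← norm_le_zero_iff]
  refine this.trans (le_of_eq (Finset.sum_eq_zero fun i hi => ?_))
  rw [iteratedFDerivWithin_of_isOpen i oU xU, hf i (by simp at hi; omega)]
  simp

lemma GFlat.fderiv {n : ℕ} {f : E → F} {x0 : E} (hf : GFlat (n+1) f x0) :
    GFlat n (fderiv ℝ f) x0 := by
  intro m hm
  rw [← norm_eq_zero, norm_iteratedFDeriv_fderiv, hf _ (by omega), norm_zero]

lemma GFlat.deriv {n : ℕ} {f : E → F} {x0 : E} (hf : GFlat (n+1) f x0)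
    (cf : ContDiffAt ℝ (n+1) f x0) (e : E) :
    GFlat n (fun y => _root_.fderiv ℝ f y e) x0 := by
  intro m hm
  rw [← norm_le_zero_iff]
  refine (norm_iteratedFDeriv_clm_apply_const (N := n) (cf.fderiv_right le_rfl)
    (by exact_mod_cast hm)).trans ?_
  rw [hf.fderiv m hm]; simp

lemma GFlat.isBigO {n : ℕ} {f : E → F} {x0 : E} (hf : GFlat n f x0)
    (cf : ContDiffAt ℝ (n+1) f x0) :
    ∃ C > 0, ∃ r > 0, ∀ x ∈ Metric.ball x0 r, ‖f x‖ ≤ C * ‖x - x0‖ ^ (n+1) := by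
  induction n generalizing F with
  | zero =>
    have h0 : f x0 = 0 := by
      have := hf 0 le_rfl
      rw [← norm_eq_zero, norm_iteratedFDeriv_zero] at this
      exact norm_eq_zero.1 this
    have hd : DifferentiableAt ℝ f x0 := cf.differentiableAt (by simp)
    obtain ⟨C, hC, hb⟩ := (hd.hasFDerivAt.isBigO_sub).exists_pos
    obtain ⟨r, hr, hb⟩ := Metric.eventually_nhds_iff_ball.1 hb.bound
    refine ⟨C, hC, r, hr, fun x hx => ?_⟩
    simpa [h0] using hb x hx
  | succ n ih =>
    have h0 : f x0 = 0 := by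
      have := hf 0 (by omega)
      rw [← norm_eq_zero, norm_iteratedFDeriv_zero] at this
      exact norm_eq_zero.1 this
    obtain ⟨C, hC, r, hr, hb⟩ := ih hf.fderiv (cf.fderiv_right (by push_cast; rfl))
    have cf1 : ∀ᶠ y in 𝓝 x0, ContDiffAt ℝ 1 f y :=
      (cf.of_le (by push_cast; exact le_add_self)).eventually (by simp)
    obtain ⟨r', hr', hd⟩ := Metric.eventually_nhds_iff_ball.1 cf1
    refine ⟨C, hC, min r r', lt_min hr hr', fun x hx => ?_⟩
    rw [Metric.mem_ball, lt_min_iff, dist_eq_norm] at hx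
    have := (convex_closedBall x0 ‖x - x0‖).norm_image_sub_le_of_norm_fderiv_le (𝕜 := ℝ) (f := f)
      (C := C * ‖x - x0‖ ^ (n+1)) (x := x0) (y := x) (fun y hy => ?_) (fun y hy => ?_)
      (by simp) (by simp [dist_eq_norm])
    · rw [h0, sub_zero] at this
      rw [pow_succ, ← mul_assoc]; exact this
    · rw [Metric.mem_closedBall] at hy
      exact (hd y (lt_of_le_of_lt hy hx.2)).differentiableAt (by simp)
    · rw [Metric.mem_closedBall] at hy
      refine (hb y (lt_of_le_of_lt hy hx.1)).trans ?_
      rw [dist_eq_norm] at hy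
      gcongr

lemma gsymm (n : ℕ) {f : E → F} {x : E} (cf : ContDiffAt ℝ n f x) (σ : Equiv.Perm (Fin n)) :
    ∀ v : Fin n → E, iteratedFDeriv ℝ n f x (v ∘ σ) = iteratedFDeriv ℝ n f x v := by
  induction n generalizing x with
  | zero => intro v; congr 1; exact Subsingleton.elim _ _
  | succ n ih =>
    have hmem : σ ∈ Submonoid.closure (Set.range fun i : Fin n => Equiv.swap i.castSucc i.succ) := by
      rw [Equiv.Perm.mclosure_swap_castSucc_succ]; trivial
    induction hmem using Submonoid.closure_induction with
    | one => intro v; rfl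
    | mul a b _ _ ha hb =>
      intro v
      have : v ∘ (a * b : Equiv.Perm _) = (v ∘ a) ∘ b := rfl
      rw [this, hb, ha]
    | mem τ hτ =>
      obtain ⟨i, rfl⟩ := hτ
      intro v
      cases n with
      | zero => exact i.elim0
      | succ n =>
      induction i using Fin.cases with
      | zero =>
        have c2 : ContDiffAt ℝ 2 (iteratedFDeriv ℝ n f) x :=
          cf.iteratedFDeriv_right (by push_cast; rw [add_assoc, add_comm, one_add_one_eq_two])
        have hs := c2.isSymmSndFDerivAt (by simp)
        have key : ∀ v : Fin (n+1+1) → E, iteratedFDeriv ℝ (n+1+1) f x v =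
            fderiv ℝ (fderiv ℝ (iteratedFDeriv ℝ n f)) x (v 0) (v 1) (fun j => v j.succ.succ) := by
          intro v
          rw [iteratedFDeriv_succ_apply_left]
          rw [iteratedFDeriv_succ_eq_comp_left]
          have hd2 : HasFDerivAt (fderiv ℝ (iteratedFDeriv ℝ n f)) _ x :=
            ((c2.fderiv_right (m := 1) (by rw [one_add_one_eq_two])).differentiableAt
              (by simp)).hasFDerivAt
          have hh := ((continuousMultilinearCurryLeftEquiv ℝ (fun _ : Fin (n+1) => E)
            F).symm.toContinuousLinearEquiv.toContinuousLinearMap.hasFDerivAt.comp x hd2).fderiv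
          refine (congrArg (fun L => L (v 0) (Fin.tail v)) hh).trans ?_
          rfl
        rw [key, key, hs]
        rfl
      | succ i =>
        rw [iteratedFDeriv_succ_apply_left, iteratedFDeriv_succ_apply_left]
        have hev : ∀ᶠ y in 𝓝 x, ContDiffAt ℝ (n+1 : ℕ) f y :=
          (cf.of_le (by exact_mod_cast Nat.le_succ _)).eventually (by simp)
        have hd : DifferentiableAt ℝ (iteratedFDeriv ℝ (n+1) f) x :=
          (cf.iteratedFDeriv_right (m := 1) (i := n+1)
            (by push_cast; rw [add_comm])).differentiableAt (by simp)
        have hf : ∀ w : Fin (n+1) → E, ∀ e, fderiv ℝ (iteratedFDeriv ℝ (n+1) f) x e w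
            = fderiv ℝ (fun y => iteratedFDeriv ℝ (n+1) f y w) x e := by
          intro w e
          have := ((ContinuousMultilinearMap.apply ℝ (fun _ : Fin (n+1) => E) F w).hasFDerivAt.comp x
            hd.hasFDerivAt).fderiv
          have h2 : (⇑(ContinuousMultilinearMap.apply ℝ (fun _ : Fin (n+1) => E) F w) ∘
            iteratedFDeriv ℝ (n+1) f) = (fun y => iteratedFDeriv ℝ (n+1) f y w) := rfl
          rw [← h2, this]; rfl
        rw [hf, hf]
        have e0 : (v ∘ (Equiv.swap i.succ.castSucc i.succ.succ)) 0 = v 0 := by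
          simp only [Function.comp]
          rw [Equiv.swap_apply_of_ne_of_ne]
          · exact (by simp [Fin.ext_iff])
          · exact (by simp [Fin.ext_iff])
        have e1 : Fin.tail (v ∘ (Equiv.swap i.succ.castSucc i.succ.succ)) =
            Fin.tail v ∘ Equiv.swap i.castSucc i.succ := by
          ext j
          simp only [Fin.tail, Function.comp]
          congr 1
          rw [← Fin.succ_castSucc, ← (Fin.succ_injective _).swap_apply]
        rw [e0, e1]
        congr 1
        apply Filter.EventuallyEq.fderiv_eq
        filter_upwards [hev] with y hy
        exact ih hy _ _
end gpw

lemma gpoly {d k : ℕ} (x0 : EuclideanSpace ℝ (Fin d))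
    (A : (EuclideanSpace ℝ (Fin d)) [×k]→L[ℝ] ℂ) :
    ∃ Q : MvPolynomial (Fin d) ℂ, Q.totalDegree ≤ k ∧ ∀ x : EuclideanSpace ℝ (Fin d),
      MvPolynomial.eval (fun i => (x i : ℂ)) Q = A (fun _ => x - x0) := by
  refine ⟨∑ r : Fin k → Fin d, MvPolynomial.C (A fun i => EuclideanSpace.single (r i) (1:ℝ)) *
    ∏ i : Fin k, (MvPolynomial.X (r i) - MvPolynomial.C ((x0 (r i) : ℝ) : ℂ)), ?_, ?_⟩
  · refine MvPolynomial.totalDegree_finsetSum_le fun r _ => ?_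
    refine (MvPolynomial.totalDegree_mul _ _).trans ?_
    rw [MvPolynomial.totalDegree_C, zero_add]
    refine (MvPolynomial.totalDegree_finsetProd _ _).trans ?_
    refine (Finset.sum_le_card_nsmul _ _ 1 fun i _ => ?_).trans (by simp)
    refine (MvPolynomial.totalDegree_sub_C_le _ _).trans ?_
    simp
  · intro x
    have hx : x - x0 = ∑ i, (x - x0) i • EuclideanSpace.single i (1:ℝ) := by
      ext j
      simp [Finset.sum_apply, Pi.single_apply]
    rw [hx]
    rw [ContinuousMultilinearMap.map_sum]
    simp only [map_sum, map_mul, map_prod, MvPolynomial.eval_C, map_sub, MvPolynomial.eval_X]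
    refine Finset.sum_congr rfl fun r _ => ?_
    rw [ContinuousMultilinearMap.map_smul_univ]
    rw [Complex.real_smul, mul_comm]
    push_cast
    simp

lemma gpoly_hasFDerivAt {d : ℕ} (P : MvPolynomial (Fin d) ℂ) (x : EuclideanSpace ℝ (Fin d)) :
    DifferentiableAt ℝ (fun x : EuclideanSpace ℝ (Fin d) =>
      MvPolynomial.eval (fun i => (x i : ℂ)) P) x ∧ ∀ j,
    fderiv ℝ (fun x : EuclideanSpace ℝ (Fin d) =>
      MvPolynomial.eval (fun i => (x i : ℂ)) P) x (EuclideanSpace.single j (1:ℝ)) =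
      MvPolynomial.eval (fun i => (x i : ℂ)) (MvPolynomial.pderiv j P) := by
  have hX : ∀ i, HasFDerivAt (fun x : EuclideanSpace ℝ (Fin d) => (x i : ℂ))
      (Complex.ofRealCLM.comp (EuclideanSpace.proj i : EuclideanSpace ℝ (Fin d) →L[ℝ] ℝ)) x :=
    fun i => (Complex.ofRealCLM.comp (EuclideanSpace.proj i :
      EuclideanSpace ℝ (Fin d) →L[ℝ] ℝ)).hasFDerivAt
  induction P using MvPolynomial.induction_on with
  | C a => simp
  | add p q hp hq =>
    simp only [map_add]
    refine ⟨hp.1.add hq.1, fun j => ?_⟩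
    rw [fderiv_fun_add hp.1 hq.1, ← hp.2 j, ← hq.2 j]; rfl
  | mul_X p i hp =>
    simp only [map_mul, MvPolynomial.eval_X]
    refine ⟨hp.1.mul (hX i).differentiableAt, fun j => ?_⟩
    rw [fderiv_fun_mul hp.1 (hX i).differentiableAt, (hX i).fderiv, Derivation.leibniz]
    simp only [add_apply, smul_apply, hp.2 j]
    by_cases h : i = j
    · subst h; simp
    · simp [MvPolynomial.pderiv_X, h]

lemma gpoly_contDiff {d : ℕ} (P : MvPolynomial (Fin d) ℂ) (n : WithTop ℕ∞) :
    ContDiff ℝ n (fun x : EuclideanSpace ℝ (Fin d) =>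
      MvPolynomial.eval (fun i => (x i : ℂ)) P) := by
  have hX : ∀ i, ContDiff ℝ n (fun x : EuclideanSpace ℝ (Fin d) => (x i : ℂ)) :=
    fun i => (Complex.ofRealCLM.comp (EuclideanSpace.proj i :
      EuclideanSpace ℝ (Fin d) →L[ℝ] ℝ)).contDiff
  induction P using MvPolynomial.induction_on with
  | C a => simpa using contDiff_const
  | add p q hp hq => simp only [map_add]; exact hp.add hq
  | mul_X p i hp => simp only [map_mul, MvPolynomial.eval_X]; exact hp.mul (hX i)

lemma gtaylor {d p : ℕ} (x0 : EuclideanSpace ℝ (Fin d)) (v : EuclideanSpace ℝ (Fin d) → ℂ)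
    (cv : ContDiffAt ℝ p v x0) :
    ∃ P : MvPolynomial (Fin d) ℂ, P.totalDegree ≤ p ∧
      GFlat p (fun x => MvPolynomial.eval (fun i => (x i : ℂ)) P + -v x) x0 := by
  let q : FormalMultilinearSeries ℝ (EuclideanSpace ℝ (Fin d)) ℂ :=
    fun k => if k < p + 1 then ((k.factorial : ℝ)⁻¹) • iteratedFDeriv ℝ k v x0 else 0
  choose Q hQ1 hQ2 using fun k => gpoly x0 (q k)
  refine ⟨∑ k ∈ Finset.range (p+1), Q k, ?_, ?_⟩
  · refine MvPolynomial.totalDegree_finsetSum_le fun k hk => (hQ1 k).trans ?_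
    simp at hk; omega
  · have hps : HasFiniteFPowerSeriesOnBall (fun x : EuclideanSpace ℝ (Fin d) =>
        MvPolynomial.eval (fun i => (x i : ℂ)) (∑ k ∈ Finset.range (p+1), Q k)) q x0 (p+1) ⊤ := by
      refine HasFiniteFPowerSeriesOnBall.mk' ?_ (by simp) ?_
      · intro m hm
        simp only [q]
        rw [if_neg (by omega)]
      · intro y _
        simp only [map_sum, hQ2]
        simp
    intro m hm
    have hsub := iteratedFDeriv_add_apply (𝕜 := ℝ) (i := m) (x := x0)
      (f := fun x : EuclideanSpace ℝ (Fin d) =>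
        MvPolynomial.eval (fun i => (x i : ℂ)) (∑ k ∈ Finset.range (p+1), Q k)) (g := -v)
      (gpoly_contDiff _ _).contDiffAt
      (cv.of_le (by exact_mod_cast hm)).neg
    refine hsub.trans ?_
    rw [iteratedFDeriv_neg_apply]
    ext e
    have h1 := hps.toHasFPowerSeriesOnBall.iteratedFDeriv_eq_sum_of_completeSpace (n := m) e
    have h2 : ∀ σ : Equiv.Perm (Fin m), q m (fun i => e (σ i)) =
        ((m.factorial : ℝ)⁻¹) • iteratedFDeriv ℝ m v x0 e := by
      intro σ
      rw [← gsymm m (cv.of_le (by exact_mod_cast hm)) σ e]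
      simp only [q]
      rw [if_pos (by omega)]
      rfl
    have h3 : (m.factorial : ℂ) ≠ 0 := by exact_mod_cast m.factorial_ne_zero
    simp only [h2, Finset.sum_const, Finset.card_univ, Fintype.card_perm, Fintype.card_fin] at h1
    simp only [add_apply, neg_apply, h1, zero_apply]
    simp [h3]

theorem gpw_main (d q : ℕ)
    (Ω : Set (EuclideanSpace ℝ (Fin d))) (hΩ : IsOpen Ω)
    (x0 : EuclideanSpace ℝ (Fin d)) (hx0 : x0 ∈ Ω)
    (κ u : EuclideanSpace ℝ (Fin d) → ℂ)
    (hu : ContDiffAt ℝ ((q + 3 : ℕ)) u x0)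
    (hpde : ∀ x ∈ Ω,
      (∑ i : Fin d, fderiv ℝ (fun y => fderiv ℝ u y (EuclideanSpace.single i (1 : ℝ))) x
          (EuclideanSpace.single i (1 : ℝ))) + κ x ^ 2 * u x = 0)
    (hu0 : u x0 ≠ 0) :
    ∃ P : MvPolynomial (Fin d) ℂ,
      P.totalDegree ≤ q + 2 ∧
      (∀ m : ℕ, m ≤ q →
        iteratedFDeriv ℝ m (fun x : EuclideanSpace ℝ (Fin d) =>
          (∑ i : Fin d, MvPolynomial.eval (fun i' => (x i' : ℂ))
              (MvPolynomial.pderiv i (MvPolynomial.pderiv i P))) +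
            (∑ i : Fin d,
              (MvPolynomial.eval (fun i' => (x i' : ℂ)) (MvPolynomial.pderiv i P)) ^ 2) +
            κ x ^ 2) x0 = 0) ∧
      ∃ C : ℝ, 0 < C ∧
        ∃ U : Set (EuclideanSpace ℝ (Fin d)), IsOpen U ∧ x0 ∈ U ∧ U ⊆ Ω ∧
          ∀ x ∈ U,
            ‖u x - Complex.exp (MvPolynomial.eval (fun i => (x i : ℂ)) P)‖ ≤
              C * ‖x - x0‖ ^ (q + 2 + 1) := by
  set v : EuclideanSpace ℝ (Fin d) → ℂ :=
    fun x => Complex.log (u x * (u x0)⁻¹) + Complex.log (u x0) with hv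
  have cv : ContDiffAt ℝ ((q + 3 : ℕ)) v x0 := by
    refine ContDiffAt.add ?_ contDiffAt_const
    have hl : ContDiffAt ℂ ((q + 3 : ℕ)) Complex.log (u x0 * (u x0)⁻¹) :=
      Complex.contDiffAt_log (by rw [mul_inv_cancel₀ hu0]; exact Complex.one_mem_slitPlane)
    exact (hl.restrict_scalars ℝ).comp x0 (hu.mul contDiffAt_const)
  have hne : ∀ᶠ x in 𝓝 x0, u x ≠ 0 := hu.continuousAt.eventually_ne hu0
  have huv : ∀ᶠ x in 𝓝 x0, u x = Complex.exp (v x) := by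
    filter_upwards [hne] with x hx
    rw [hv]
    simp only
    rw [Complex.exp_add, Complex.exp_log (by positivity), Complex.exp_log hu0]
    field_simp
  have cv2 : ∀ᶠ x in 𝓝 x0, ContDiffAt ℝ 2 v x :=
    (cv.of_le (by norm_cast; omega)).eventually (by simp)
  -- the equation for the phase
  have heq : ∀ᶠ x in 𝓝 x0, (∑ i : Fin d, fderiv ℝ (fun y => fderiv ℝ v y
      (EuclideanSpace.single i (1 : ℝ))) x (EuclideanSpace.single i (1 : ℝ))) +
      (∑ i : Fin d, (fderiv ℝ v x (EuclideanSpace.single i (1 : ℝ))) ^ 2) + κ x ^ 2 = 0 := by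
    have hfd : ∀ᶠ x in 𝓝 x0, ∀ e, fderiv ℝ u x e = Complex.exp (v x) * fderiv ℝ v x e := by
      filter_upwards [huv.eventually_nhds, cv2] with x hx hc e
      rw [Filter.EventuallyEq.fderiv_eq hx]
      have := ((hc.differentiableAt (by simp)).hasFDerivAt.cexp).fderiv
      rw [this]; rfl
    filter_upwards [hfd.eventually_nhds, cv2, hΩ.mem_nhds hx0, huv] with x hx hc hxΩ hux
    have hp := hpde x hxΩ
    have h2 : ∀ i : Fin d, fderiv ℝ (fun y => fderiv ℝ u y (EuclideanSpace.single i (1 : ℝ))) x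
          (EuclideanSpace.single i (1 : ℝ)) = Complex.exp (v x) * (fderiv ℝ (fun y => fderiv ℝ v y
      (EuclideanSpace.single i (1 : ℝ))) x (EuclideanSpace.single i (1 : ℝ)) +
        (fderiv ℝ v x (EuclideanSpace.single i (1 : ℝ))) ^ 2) := by
      intro i
      have hx' : (fun y => fderiv ℝ u y (EuclideanSpace.single i (1 : ℝ))) =ᶠ[𝓝 x]
          fun y => Complex.exp (v y) * fderiv ℝ v y (EuclideanSpace.single i (1 : ℝ)) := by
        filter_upwards [hx] with y hy using hy _
      rw [hx'.fderiv_eq]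
      have hd1 := (hc.differentiableAt (by simp)).hasFDerivAt.cexp
      have hd2 : DifferentiableAt ℝ
          (fun y => fderiv ℝ v y (EuclideanSpace.single i (1 : ℝ))) x :=
        ((hc.fderiv_right (m := 1) (by rw [one_add_one_eq_two])).differentiableAt
          (by simp)).clm_apply (differentiableAt_const _)
      rw [fderiv_fun_mul hd1.differentiableAt hd2, hd1.fderiv]
      simp only [add_apply, smul_apply, smul_eq_mul]
      ring
    simp only [h2] at hp
    rw [← Finset.mul_sum, hux, Finset.sum_add_distrib] at hp
    have : Complex.exp (v x) * ((∑ i : Fin d, fderiv ℝ (fun y => fderiv ℝ v y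
      (EuclideanSpace.single i (1 : ℝ))) x (EuclideanSpace.single i (1 : ℝ))) +
      (∑ i : Fin d, (fderiv ℝ v x (EuclideanSpace.single i (1 : ℝ))) ^ 2) + κ x ^ 2) = 0 := by
      rw [← hp]; ring
    exact (mul_eq_zero.1 this).resolve_left (Complex.exp_ne_zero _)
  obtain ⟨P, hPd, hflat⟩ := gtaylor (p := q + 2) x0 v (cv.of_le (by norm_cast; omega))
  set f : EuclideanSpace ℝ (Fin d) → ℂ := fun x => MvPolynomial.eval (fun i => (x i : ℂ)) P with hf
  set w : EuclideanSpace ℝ (Fin d) → ℂ := fun x => f x + -v x with hw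
  have cf : ∀ n, ContDiff ℝ n f := gpoly_contDiff P
  have cw : ContDiffAt ℝ ((q + 3 : ℕ)) w x0 := (cf _).contDiffAt.add cv.neg
  refine ⟨P, hPd, ?_, ?_⟩
  · have e1 : ∀ i, (fun x : EuclideanSpace ℝ (Fin d) => MvPolynomial.eval (fun i' => (x i' : ℂ))
        (MvPolynomial.pderiv i P)) = fun x => fderiv ℝ f x (EuclideanSpace.single i (1:ℝ)) := by
      intro i; funext x; exact ((gpoly_hasFDerivAt P x).2 i).symm
    have e2 : ∀ i (x : EuclideanSpace ℝ (Fin d)), MvPolynomial.eval (fun i' => (x i' : ℂ))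
        (MvPolynomial.pderiv i (MvPolynomial.pderiv i P)) =
        fderiv ℝ (fun y => fderiv ℝ f y (EuclideanSpace.single i (1:ℝ))) x
          (EuclideanSpace.single i (1:ℝ)) := by
      intro i x
      rw [← (gpoly_hasFDerivAt (MvPolynomial.pderiv i P) x).2 i, e1]
    have e1' : ∀ i (x : EuclideanSpace ℝ (Fin d)), MvPolynomial.eval (fun i' => (x i' : ℂ))
        (MvPolynomial.pderiv i P) = fderiv ℝ f x (EuclideanSpace.single i (1:ℝ)) :=
      fun i x => congrFun (e1 i) x
    have hwd : ∀ᶠ x in 𝓝 x0, ∀ e, fderiv ℝ w x e = fderiv ℝ f x e + -fderiv ℝ v x e := by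
      filter_upwards [cv2] with x hc e
      rw [hw, fderiv_fun_add ((cf 1).contDiffAt.differentiableAt (by simp))
        (hc.differentiableAt (by simp)).fun_neg, fderiv_fun_neg]
      rfl
    have hev : (fun x : EuclideanSpace ℝ (Fin d) =>
          (∑ i : Fin d, MvPolynomial.eval (fun i' => (x i' : ℂ))
              (MvPolynomial.pderiv i (MvPolynomial.pderiv i P))) +
            (∑ i : Fin d,
              (MvPolynomial.eval (fun i' => (x i' : ℂ)) (MvPolynomial.pderiv i P)) ^ 2) +
            κ x ^ 2) =ᶠ[𝓝 x0] fun x =>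
          (∑ i : Fin d, fderiv ℝ (fun y => fderiv ℝ w y (EuclideanSpace.single i (1:ℝ))) x
            (EuclideanSpace.single i (1:ℝ))) +
          ∑ i : Fin d, fderiv ℝ w x (EuclideanSpace.single i (1:ℝ)) *
            (fderiv ℝ f x (EuclideanSpace.single i (1:ℝ)) +
              fderiv ℝ v x (EuclideanSpace.single i (1:ℝ))) := by
      filter_upwards [hwd.eventually_nhds, cv2, heq] with x hx hc hk
      simp only [e2, e1']
      have h2 : ∀ i : Fin d, fderiv ℝ (fun y => fderiv ℝ w y (EuclideanSpace.single i (1:ℝ))) x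
            (EuclideanSpace.single i (1:ℝ)) =
          fderiv ℝ (fun y => fderiv ℝ f y (EuclideanSpace.single i (1:ℝ))) x
            (EuclideanSpace.single i (1:ℝ)) +
          -fderiv ℝ (fun y => fderiv ℝ v y (EuclideanSpace.single i (1:ℝ))) x
            (EuclideanSpace.single i (1:ℝ)) := by
        intro i
        have hx' : (fun y => fderiv ℝ w y (EuclideanSpace.single i (1 : ℝ))) =ᶠ[𝓝 x]
            fun y => fderiv ℝ f y (EuclideanSpace.single i (1 : ℝ)) +
              -fderiv ℝ v y (EuclideanSpace.single i (1 : ℝ)) := by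
          filter_upwards [hx] with y hy using hy _
        rw [hx'.fderiv_eq]
        have hd2 : DifferentiableAt ℝ
            (fun y => fderiv ℝ v y (EuclideanSpace.single i (1 : ℝ))) x :=
          ((hc.fderiv_right (m := 1) (by rw [one_add_one_eq_two])).differentiableAt
            (by simp)).clm_apply (differentiableAt_const _)
        have hd1 : DifferentiableAt ℝ
            (fun y => fderiv ℝ f y (EuclideanSpace.single i (1 : ℝ))) x :=
          (((cf 2).contDiffAt.fderiv_right (m := 1) (by rw [one_add_one_eq_two])).differentiableAt
            (by simp)).clm_apply (differentiableAt_const _)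
        rw [fderiv_fun_add hd1 hd2.fun_neg, fderiv_fun_neg]
        rfl
      have h3 : ∀ i : Fin d, fderiv ℝ w x (EuclideanSpace.single i (1:ℝ)) *
            (fderiv ℝ f x (EuclideanSpace.single i (1:ℝ)) +
              fderiv ℝ v x (EuclideanSpace.single i (1:ℝ))) =
          fderiv ℝ f x (EuclideanSpace.single i (1:ℝ)) ^ 2 +
            -fderiv ℝ v x (EuclideanSpace.single i (1:ℝ)) ^ 2 := by
        intro i
        rw [hx.self_of_nhds]; ring
      simp only [h2, h3, Finset.sum_add_distrib, Finset.sum_neg_distrib]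
      linear_combination hk
    intro m hm
    rw [(hev.iteratedFDeriv ℝ m).self_of_nhds]
    have c1 : ∀ e, ContDiffAt ℝ ((q + 1 : ℕ)) (fun y => fderiv ℝ w y e) x0 := fun e =>
      (cw.fderiv_right (by norm_cast; omega)).clm_apply contDiffAt_const
    have c1v : ∀ e, ContDiffAt ℝ q (fun y => fderiv ℝ v y e) x0 := fun e =>
      (cv.fderiv_right (by norm_cast; omega)).clm_apply contDiffAt_const
    have c1f : ∀ e, ContDiffAt ℝ q (fun y => fderiv ℝ f y e) x0 := fun e =>
      ((cf (q+1)).contDiffAt.fderiv_right le_rfl).clm_apply contDiffAt_const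
    have c2 : ∀ e, ContDiffAt ℝ q (fun x => fderiv ℝ (fun y => fderiv ℝ w y e) x e) x0 := fun e =>
      ((c1 e).fderiv_right (by norm_cast)).clm_apply contDiffAt_const
    have f1 : ∀ e, GFlat (q+1) (fun y => fderiv ℝ w y e) x0 := fun e =>
      hflat.deriv (cw.of_le (by norm_cast; omega)) e
    have f2 : ∀ e, GFlat q (fun x => fderiv ℝ (fun y => fderiv ℝ w y e) x e) x0 := fun e =>
      (f1 e).deriv (by exact_mod_cast c1 e) e
    have f1' : ∀ e, GFlat q (fun y => fderiv ℝ w y e) x0 := fun e m hm => f1 e m (by omega)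
    have c1' : ∀ e, ContDiffAt ℝ q (fun y => fderiv ℝ w y e) x0 := fun e =>
      (c1 e).of_le (by norm_cast; omega)
    refine (GFlat.add (GFlat.sum _ (fun i => f2 _) fun i => c2 _)
      (GFlat.sum _ (fun i => (f1' _).mul (c1' _) ((c1f _).add (c1v _)))
        fun i => (c1' _).mul ((c1f _).add (c1v _)))
      (ContDiffAt.sum fun i _ => c2 _)
      (ContDiffAt.sum fun i _ => (c1' _).mul ((c1f _).add (c1v _)))) m hm
  · obtain ⟨C, hC, r, hr, hb⟩ := hflat.isBigO (by exact_mod_cast cw)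
    have hw0 : w x0 = 0 := by
      have := hflat 0 (by omega)
      rw [← norm_eq_zero, norm_iteratedFDeriv_zero] at this
      exact norm_eq_zero.1 this
    have hw1 : ∀ᶠ x in 𝓝 x0, ‖w x‖ < 1 :=
      cw.continuousAt.norm.eventually_lt_const (by simp [hw0])
    have hM : ∀ᶠ x in 𝓝 x0, ‖Complex.exp (v x)‖ < ‖Complex.exp (v x0)‖ + 1 :=
      cv.continuousAt.cexp.norm.eventually_lt_const (by simp)
    have hall := (((hw1.and hM).and huv).and (Metric.ball_mem_nhds x0 hr)).and (hΩ.mem_nhds hx0)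
    obtain ⟨U, hU, oU, xU⟩ := mem_nhds_iff.1 hall
    refine ⟨(‖Complex.exp (v x0)‖ + 1) * (2 * C), by positivity, U, oU, xU,
      fun x hx => (hU hx).2, fun x hx => ?_⟩
    obtain ⟨⟨⟨⟨h1, h2⟩, h3⟩, h4⟩, _⟩ := hU hx
    have h5 : u x - Complex.exp (f x) = -(Complex.exp (v x) * (Complex.exp (w x) - 1)) := by
      rw [mul_sub, ← Complex.exp_add, h3, hw]
      simp only
      rw [show v x + (f x + -v x) = f x by ring]
      ring
    change ‖u x - Complex.exp (f x)‖ ≤ _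
    rw [h5, norm_neg, norm_mul, mul_assoc, mul_assoc]
    have h6 := Complex.norm_exp_sub_one_le h1.le
    have h7 := hb x h4
    gcongr
    exact h6.trans (by gcongr)


/-- GPW best approximation for the variable-coefficient Helmholtz
operator `Δ + κ²`: if `u` is a `C^{p+2}` solution of `Δu + κ²u = 0` on an open
neighborhood `Ω` of `x0` with `u(x0) ≠ 0` and `κ²` of class `C^{p−2}` on `Ω`, then there
is a polynomial `P` of total degree `≤ p` satisfying the quasi-Trefftz property at `x0`,
a constant `C > 0` and an open neighborhood `U ⊆ Ω` of `x0` such that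
`|u(x) − e^{P(x)}| ≤ C |x − x0|^{p+1}` on `U`. -/
theorem stmt_14 (d p : ℕ) (hd : 1 ≤ d) (hp : 2 ≤ p)
    (Ω : Set (EuclideanSpace ℝ (Fin d))) (hΩ : IsOpen Ω)
    (x0 : EuclideanSpace ℝ (Fin d)) (hx0 : x0 ∈ Ω)
    (κ u : EuclideanSpace ℝ (Fin d) → ℂ)
    (hκ : ContDiffOn ℝ (↑(p - 2) : ℕ∞) (fun x => κ x ^ 2) Ω)
    (hu : ContDiffOn ℝ (↑(p + 2) : ℕ∞) u Ω)
    (hpde : ∀ x ∈ Ω,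
      (∑ i : Fin d, fderiv ℝ (fun y => fderiv ℝ u y (EuclideanSpace.single i (1 : ℝ))) x
          (EuclideanSpace.single i (1 : ℝ))) + κ x ^ 2 * u x = 0)
    (hu0 : u x0 ≠ 0) :
    ∃ P : MvPolynomial (Fin d) ℂ,
      P.totalDegree ≤ p ∧
      (∀ m : ℕ, m ≤ p - 2 →
        iteratedFDeriv ℝ m (fun x : EuclideanSpace ℝ (Fin d) =>
          (∑ i : Fin d, MvPolynomial.eval (fun i' => (x i' : ℂ))
              (MvPolynomial.pderiv i (MvPolynomial.pderiv i P))) +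
            (∑ i : Fin d,
              (MvPolynomial.eval (fun i' => (x i' : ℂ)) (MvPolynomial.pderiv i P)) ^ 2) +
            κ x ^ 2) x0 = 0) ∧
      ∃ C : ℝ, 0 < C ∧
        ∃ U : Set (EuclideanSpace ℝ (Fin d)), IsOpen U ∧ x0 ∈ U ∧ U ⊆ Ω ∧
          ∀ x ∈ U,
            ‖u x - Complex.exp (MvPolynomial.eval (fun i => (x i : ℂ)) P)‖ ≤
              C * ‖x - x0‖ ^ (p + 1) := by
  obtain ⟨q, rfl⟩ : ∃ q, p = q + 2 := ⟨p - 2, by omega⟩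
  have hu' : ContDiffAt ℝ ((q + 3 : ℕ)) u x0 :=
    (hu.contDiffAt (hΩ.mem_nhds hx0)).of_le
      ((WithTop.coe_le_coe (b := ((q + 3 : ℕ) : ℕ∞))).2
        (Nat.cast_le.2 (by omega : q + 3 ≤ q + 2 + 2)))
  exact gpw_main d q Ω hΩ x0 hx0 κ u hu' hpde hu0
end
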